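/- arXiv:1210.3187 — 2 statements merged into one kernel-verified Lean document; each statement's English description precedes it below -/
import Mathlib

section
/- Let G be a bipartite graph with parts V₁, V₂, |V₁| = |V₂| = n. If G has no isolated vertices and has no perfect matching, then there exists i ∈ {1,2} and a set A ⊆ V_i such that: (i) the neighborhood Γ(A) has exactly |A|−1 elements; (ii) the subgraph induced by A ∪ Γ(A) is connected; (iii) 2 ≤ |A| ≤ (n+1)/2. -/
open Finset

/-!
Call a vertex set `A` deficient if `|Γ(A)| < |A|`; by Hall's theorem a bipartite graph without a
perfect matching has one, and we take `A` deficient of least size. Deleting a vertex shows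
`|Γ(A)| = |A| - 1`. If `A = B ∪ C` with `Γ(B)` and `Γ(C)` disjoint, then `B` or `C` is deficient,
hence is all of `A`: applied to the two sides of the bipartition this puts `A` in one of them, and
applied to a component of `A ∪ Γ(A)` it gives connectedness. Finally, if `A ⊆ V₁` then
`V₂ \ Γ(A)` has all its neighbours in `V₁ \ A`, so it is deficient too, and comparing its size
`n - |A| + 1` with `|A|` gives the upper bound.
-/

section

variable {V : Type*} {G : SimpleGraph V}

theorem connected_induce_of_forall_adj_closed {S : Set V} {u : V} (hu : u ∈ S)
    (h : ∀ T ⊆ S, u ∈ T → (∀ x ∈ T, ∀ y ∈ S, G.Adj x y → y ∈ T) → S ⊆ T) :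
    (G.induce S).Connected := by
  let T : Set V := {x | ∃ hx : x ∈ S, (G.induce S).Reachable ⟨u, hu⟩ ⟨x, hx⟩}
  have hST : S ⊆ T := by
    refine h T (fun x hx => hx.1) ⟨hu, .rfl⟩ ?_
    rintro x ⟨hx, hux⟩ y hy hxy
    have hxy' : (G.induce S).Adj ⟨x, hx⟩ ⟨y, hy⟩ := hxy
    exact ⟨hy, hux.trans hxy'.reachable⟩
  rw [SimpleGraph.connected_iff_exists_forall_reachable]
  exact ⟨⟨u, hu⟩, fun x => (hST x.2).2⟩

variable [DecidableEq V] [G.LocallyFinite] {A B C s t : Finset V}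

variable (G) in
/-- The neighbourhood `Γ(A)`: the vertices adjacent to at least one vertex of `A`. It may meet
`A`. -/
def neighborhood (A : Finset V) : Finset V :=
  A.biUnion fun a => G.neighborFinset a

theorem mem_neighborhood {v : V} : v ∈ neighborhood G A ↔ ∃ a ∈ A, G.Adj a v := by
  simp [neighborhood]

theorem neighborhood_eq_filter [Fintype V] [DecidableRel G.Adj] :
    neighborhood G A = univ.filter fun v => ∃ a ∈ A, G.Adj a v := by
  ext v
  simp [mem_neighborhood]

theorem neighborhood_mono (h : A ⊆ B) : neighborhood G A ⊆ neighborhood G B :=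
  biUnion_subset_biUnion_of_subset_left _ h

theorem neighborhood_union :
    neighborhood G (A ∪ B) = neighborhood G A ∪ neighborhood G B :=
  union_biUnion

theorem isBipartiteWith_neighborhood_subset (h : G.IsBipartiteWith s t) (hA : A ⊆ s) :
    neighborhood G A ⊆ t :=
  biUnion_subset.mpr fun _ ha => SimpleGraph.isBipartiteWith_neighborFinset_subset h (hA ha)

theorem isBipartiteWith_neighborhood_sdiff_subset (h : G.IsBipartiteWith s t) :
    neighborhood G (t \ neighborhood G A) ⊆ s \ A := by
  intro v hv
  obtain ⟨b, hb, hbv⟩ := mem_neighborhood.mp hv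
  obtain ⟨hbt, hbA⟩ := mem_sdiff.mp hb
  exact mem_sdiff.mpr ⟨h.mem_of_mem_adj' hbt hbv.symm,
    fun hvA => hbA (mem_neighborhood.mpr ⟨v, hvA, hbv.symm⟩)⟩

theorem connected_induce_union_neighborhood (hA : A.Nonempty)
    (h : ∀ B C, B ∪ C = A → Disjoint (neighborhood G B) (neighborhood G C) → B = A ∨ C = A) :
    (G.induce ((A ∪ neighborhood G A : Finset V) : Set V)).Connected := by
  classical
  obtain ⟨a₀, ha₀⟩ := hA
  refine connected_induce_of_forall_adj_closed (mem_union_left _ ha₀) fun T _ ha₀T hT => ?_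
  have hdisj : Disjoint (neighborhood G {a ∈ A | a ∈ T}) (neighborhood G {a ∈ A | a ∉ T}) := by
    refine disjoint_left.mpr fun w hwB hwC => ?_
    obtain ⟨x, hx, hxw⟩ := mem_neighborhood.mp hwB
    obtain ⟨y, hy, hyw⟩ := mem_neighborhood.mp hwC
    rw [mem_filter] at hx hy
    have hwT : w ∈ T :=
      hT x hx.2 w (mem_union_right _ (mem_neighborhood.mpr ⟨x, hx.1, hxw⟩)) hxw
    exact hy.2 (hT w hwT y (mem_union_left _ hy.1) hyw.symm)
  have hAT : ∀ a ∈ A, a ∈ T := by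
    rcases h _ _ (filter_union_filter_not_eq _ A) hdisj with hB | hC
    · exact filter_eq_self.mp hB
    · exact absurd ha₀T (filter_eq_self.mp hC a₀ ha₀)
  intro x hx
  rcases mem_union.mp hx with hxA | hxN
  · exact hAT x hxA
  · obtain ⟨a, ha, hax⟩ := mem_neighborhood.mp hxN
    exact hT a (hAT a ha) x hx hax

variable (G) in
/-- A set is deficient if it violates Hall's condition, that is, has more elements than
neighbours. -/
def IsDeficient (A : Finset V) : Prop :=
  #(neighborhood G A) < #A

theorem IsDeficient.nonempty (hA : IsDeficient G A) : A.Nonempty :=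
  card_pos.mp (Nat.zero_lt_of_lt hA)

theorem IsDeficient.of_union (h : IsDeficient G (B ∪ C))
    (hdisj : Disjoint (neighborhood G B) (neighborhood G C)) :
    IsDeficient G B ∨ IsDeficient G C := by
  have hlt : #(neighborhood G B) + #(neighborhood G C) < #B + #C := by
    calc #(neighborhood G B) + #(neighborhood G C)
        = #(neighborhood G (B ∪ C)) := by rw [neighborhood_union, card_union_of_disjoint hdisj]
      _ < #(B ∪ C) := h
      _ ≤ #B + #C := card_union_le B C
  unfold IsDeficient
  omega

theorem IsDeficient.sdiff_neighborhood (hA : IsDeficient G A) (h : G.IsBipartiteWith s t)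
    (hAs : A ⊆ s) (hst : #s ≤ #t) : IsDeficient G (t \ neighborhood G A) := by
  have hAs_card : #A ≤ #s := card_le_card hAs
  calc #(neighborhood G (t \ neighborhood G A))
      ≤ #(s \ A) := card_le_card (isBipartiteWith_neighborhood_sdiff_subset h)
    _ = #s - #A := card_sdiff_of_subset hAs
    _ < #t - #(neighborhood G A) := by unfold IsDeficient at hA; omega
    _ ≤ #(t \ neighborhood G A) := le_card_sdiff _ _

theorem exists_isDeficient_of_not_exists_isPerfectMatching {s t : Set V}
    (h : G.IsBipartiteWith s t) (hM : ¬ ∃ M : G.Subgraph, M.IsPerfectMatching) :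
    ∃ A, IsDeficient G A := by
  by_contra! hHall
  refine hM (SimpleGraph.exists_isPerfectMatching_of_forall_ncard_le h fun S => ?_)
  rcases S.finite_or_infinite with hS | hS
  · lift S to Finset V using hS
    have hN : ⋃ x ∈ (S : Set V), G.neighborSet x = neighborhood G S := by
      simp [neighborhood]
    rw [hN, Set.ncard_coe_finset, Set.ncard_coe_finset]
    exact not_lt.mp (hHall S)
  · simp [hS.ncard]

theorem card_neighborhood_add_one_of_minimal_isDeficient (hA : Minimal (IsDeficient G) A) :
    #(neighborhood G A) + 1 = #A := by
  obtain ⟨a, ha⟩ := hA.prop.nonempty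
  have herase : ¬ IsDeficient G (A.erase a) := hA.not_prop_of_lt (erase_ssubset ha)
  refine le_antisymm hA.prop ?_
  calc #A = #(A.erase a) + 1 := (card_erase_add_one ha).symm
    _ ≤ #(neighborhood G (A.erase a)) + 1 := Nat.add_le_add_right (not_lt.mp herase) 1
    _ ≤ #(neighborhood G A) + 1 := by
        gcongr
        exact neighborhood_mono (erase_subset a A)

theorem two_le_card_of_minimal_isDeficient (hA : Minimal (IsDeficient G) A)
    (hN : (neighborhood G A).Nonempty) : 2 ≤ #A :=
  calc 2 ≤ #(neighborhood G A) + 1 := Nat.add_le_add_right hN.card_pos 1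
    _ = #A := card_neighborhood_add_one_of_minimal_isDeficient hA

theorem eq_or_eq_of_minimal_isDeficient_of_disjoint (hA : Minimal (IsDeficient G) A)
    (hBC : B ∪ C = A) (hdisj : Disjoint (neighborhood G B) (neighborhood G C)) :
    B = A ∨ C = A := by
  subst hBC
  exact (hA.prop.of_union hdisj).imp
    (fun hB => hA.eq_of_le hB subset_union_left)
    (fun hC => hA.eq_of_le hC subset_union_right)

theorem connected_induce_union_neighborhood_of_minimal_isDeficient
    (hA : Minimal (IsDeficient G) A) :
    (G.induce ((A ∪ neighborhood G A : Finset V) : Set V)).Connected :=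
  connected_induce_union_neighborhood hA.prop.nonempty fun _ _ =>
    eq_or_eq_of_minimal_isDeficient_of_disjoint hA

theorem subset_or_subset_of_minimal_isDeficient (hA : Minimal (IsDeficient G) A)
    (h : G.IsBipartiteWith s t) (hAst : A ⊆ s ∪ t) : A ⊆ s ∨ A ⊆ t := by
  have hsplit : A ∩ s ∪ A ∩ t = A := by
    rw [← inter_union_distrib_left, inter_eq_left.mpr hAst]
  have hdisj : Disjoint (neighborhood G (A ∩ s)) (neighborhood G (A ∩ t)) :=
    (disjoint_coe.mp h.disjoint.symm).mono
      (isBipartiteWith_neighborhood_subset h inter_subset_right)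
      (isBipartiteWith_neighborhood_subset h.symm inter_subset_right)
  exact (eq_or_eq_of_minimal_isDeficient_of_disjoint hA hsplit hdisj).imp
    inter_eq_left.mp inter_eq_left.mp

theorem two_mul_card_le_of_minimalFor_isDeficient (hA : MinimalFor (IsDeficient G) card A)
    (h : G.IsBipartiteWith s t) (hAs : A ⊆ s) (hst : #s ≤ #t) : 2 * #A ≤ #t + 1 := by
  have hcard : #(neighborhood G A) + 1 = #A :=
    card_neighborhood_add_one_of_minimal_isDeficient
      (hA.minimal_of_strictMonoOn (card_strictMono.strictMonoOn _))
  have hle : #A ≤ #t - #(neighborhood G A) := by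
    rw [← card_sdiff_of_subset (isBipartiteWith_neighborhood_subset h hAs)]
    exact MinimalFor.le hA (hA.prop.sdiff_neighborhood h hAs hst)
  omega

end

/-- Bollobás, Lemma 7.12: if a bipartite graph with parts of equal size `n`
has no isolated vertices and no perfect matching, then some side contains a set `A` with
`|Γ(A)| = |A| − 1`, the subgraph induced on `A ∪ Γ(A)` connected, and `2 ≤ |A| ≤ (n+1)/2`. -/
theorem bipartite_no_matching_blocking_set
    {V : Type*} [Fintype V] [DecidableEq V] (G : SimpleGraph V) [DecidableRel G.Adj]
    (n : ℕ) (V₁ V₂ : Finset V)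
    (hdisj : Disjoint V₁ V₂) (hcover : V₁ ∪ V₂ = Finset.univ)
    (hcard₁ : V₁.card = n) (hcard₂ : V₂.card = n)
    (hbip : ∀ u v, G.Adj u v → (u ∈ V₁ ∧ v ∈ V₂) ∨ (u ∈ V₂ ∧ v ∈ V₁))
    (hnoiso : ∀ v : V, ∃ w, G.Adj v w)
    (hnomatch : ¬ ∃ M : G.Subgraph, M.IsPerfectMatching) :
    ∃ A : Finset V, (A ⊆ V₁ ∨ A ⊆ V₂) ∧
      (Finset.univ.filter (fun v => ∃ a ∈ A, G.Adj a v)).card = A.card - 1 ∧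
      (G.induce ((A ∪ Finset.univ.filter (fun v => ∃ a ∈ A, G.Adj a v) : Finset V) :
        Set V)).Connected ∧
      2 ≤ A.card ∧ (A.card : ℝ) ≤ ((n : ℝ) + 1) / 2 := by
  have hG : G.IsBipartiteWith V₁ V₂ := ⟨disjoint_coe.mpr hdisj, hbip⟩
  obtain ⟨A, hA⟩ := exists_minimalFor_of_wellFoundedLT (IsDeficient G) card
    (exists_isDeficient_of_not_exists_isPerfectMatching hG hnomatch)
  have hAmin : Minimal (IsDeficient G) A :=
    hA.minimal_of_strictMonoOn (card_strictMono.strictMonoOn _)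
  have hside : A ⊆ V₁ ∨ A ⊆ V₂ :=
    subset_or_subset_of_minimal_isDeficient hAmin hG (by simp [hcover])
  have hcard : #(neighborhood G A) = #A - 1 :=
    Nat.eq_sub_of_add_eq (card_neighborhood_add_one_of_minimal_isDeficient hAmin)
  have htwo : 2 ≤ #A := by
    obtain ⟨a, ha⟩ := hAmin.prop.nonempty
    obtain ⟨w, haw⟩ := hnoiso a
    exact two_le_card_of_minimal_isDeficient hAmin ⟨w, mem_neighborhood.mpr ⟨a, ha, haw⟩⟩
  have hbound : 2 * #A ≤ n + 1 := by
    rcases hside with hA₁ | hA₂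
    · simpa [hcard₂] using two_mul_card_le_of_minimalFor_isDeficient hA hG hA₁ (by omega)
    · simpa [hcard₁] using two_mul_card_le_of_minimalFor_isDeficient hA hG.symm hA₂ (by omega)
  have hbound' : 2 * (#A : ℝ) ≤ n + 1 := mod_cast hbound
  refine ⟨A, hside, ?_⟩
  rw [← neighborhood_eq_filter]
  exact ⟨hcard, connected_induce_union_neighborhood_of_minimal_isDeficient hAmin, htwo,
    (le_div_iff₀' two_pos).mpr hbound'⟩
end

section
/- Let 0 < q < 1/2, 0 < ε < 1/12, and suppose ε·n·q·(1−q) ≥ 12. Let S_{n,q} be a Binomial(n,q) random variable. Then P( |S_{n,q}/(nq) − 1| > ε ) ≤ (1/√(ε² n q)) · e^{−nqε²/3}. -/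
open Finset MeasureTheory ProbabilityTheory Real
open InformationTheory
open scoped unitInterval

/-!
Let `m = np` be the mean and `d = mε` the deviation. Beyond `m ± d` the binomial point masses decay
at least geometrically, so each tail is at most an explicit factor times its first point mass.
Stirling's formula bounds the point mass at `k` by a polynomial factor times `exp (-m φ(k / m))`,
where `φ(t) = t log t + 1 - t` is at least `(t - 1)² / 3` on `[0, 2]`; this is the source of the `3`
in the exponent. Rounding `m ± d` to an integer is harmless when `d ≥ 3√m / 4`, and for smaller `d`
the bound exceeds `1`. The factor for the upper tail is good enough only if `p ≤ 2 / 3`; for larger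
`p`, Hoeffding's inequality has a better exponent.
-/

lemma sub_one_sq_div_three_le_klFun {t : ℝ} (h0 : 0 ≤ t) (h2 : t ≤ 2) :
    (t - 1) ^ 2 / 3 ≤ klFun t := by
  rw [klFun_apply]
  rcases h0.eq_or_lt with rfl | hpos
  · norm_num
  rcases le_total t 1 with h1 | h1
  · have hlog : (t - t⁻¹) / 2 ≤ log t := by
      rw [← sinh_log hpos, sinh_le_self_iff]
      exact log_nonpos h0 h1
    have hmul : (t ^ 2 - 1) / 2 ≤ t * log t := by
      calc (t ^ 2 - 1) / 2 = t * ((t - t⁻¹) / 2) := by field_simp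
        _ ≤ t * log t := by gcongr
    linarith [sq_nonneg (t - 1)]
  · have hlog : 2 * (t - 1) / (t + 1) ≤ log t := by
      convert Real.le_log_one_add_of_nonneg (sub_nonneg.2 h1) using 2 <;> ring
    have hmul : t - 1 + (t - 1) ^ 2 / 3 ≤ t * log t := by
      calc t - 1 + (t - 1) ^ 2 / 3 ≤ t * (2 * (t - 1) / (t + 1)) := by
            rw [← mul_div_assoc, le_div_iff₀ (by linarith)]
            nlinarith [mul_nonneg (sq_nonneg (t - 1)) (sub_nonneg.2 h2)]
        _ ≤ t * log t := by gcongr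
    linarith

lemma div_pow_le_exp_sub {x : ℝ} (hx : 0 ≤ x) (j : ℕ) : (x / j) ^ j ≤ exp (x - j) := by
  rcases j.eq_zero_or_pos with rfl | hj
  · simpa using hx
  have hbase : x / j ≤ exp (x / j - 1) := by linarith [add_one_le_exp (x / j - 1)]
  calc (x / j) ^ j ≤ exp (x / j - 1) ^ j := by gcongr
    _ = exp (x - j) := by
      rw [← exp_nat_mul]
      field_simp

lemma div_pow_mul_div_pow_le_exp_neg_klFun {m x : ℝ} (hm : 0 < m) (hx : 0 ≤ x) {k j : ℕ}
    (h : m + x = k + j) : (m / k) ^ k * (x / j) ^ j ≤ exp (-(m * klFun (k / m))) := by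
  have hfirst : (m / k) ^ k = exp (-(k * log (k / m))) := by
    rcases k.eq_zero_or_pos with rfl | hk
    · simp
    rw [← mul_neg, ← log_inv, inv_div, exp_nat_mul, exp_log (by positivity)]
  calc (m / k) ^ k * (x / j) ^ j ≤ exp (-(k * log (k / m))) * exp (x - j) := by
        rw [hfirst]
        gcongr
        exact div_pow_le_exp_sub hx j
    _ = exp (-(m * klFun (k / m))) := by
      rw [← exp_add, klFun_apply, show x = k + j - m by linarith]
      congr 1
      field_simp
      ring

lemma factorial_le_stirling {n : ℕ} (hn : n ≠ 0) :
    (n.factorial : ℝ) ≤ exp 1 * √n * (n / exp 1) ^ n := by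
  obtain ⟨m, rfl⟩ := Nat.exists_eq_succ_of_ne_zero hn
  have hseq : Stirling.stirlingSeq (m + 1) ≤ exp 1 / √2 := by
    simpa using Stirling.stirlingSeq'_antitone (Nat.zero_le m)
  rw [Stirling.stirlingSeq, div_le_iff₀ (by positivity), sqrt_mul zero_le_two] at hseq
  refine hseq.trans_eq ?_
  field_simp

lemma cast_add_choose_le {k j : ℕ} (hk : k ≠ 0) (hj : j ≠ 0) :
    ((k + j).choose k : ℝ) ≤ exp 1 / (2 * π) * √((k + j) / (k * j)) *
      (((k + j) / k) ^ k * ((k + j) / j) ^ j) := by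
  have hn : ((k + j).factorial : ℝ) ≤ _ := factorial_le_stirling (by omega)
  have hk' := Stirling.le_factorial_stirling k
  have hj' := Stirling.le_factorial_stirling j
  rw [Nat.cast_add_choose]
  calc ((k + j).factorial : ℝ) / (k.factorial * j.factorial)
      ≤ exp 1 * √(k + j : ℕ) * ((k + j : ℕ) / exp 1) ^ (k + j) /
        (√(2 * π * k) * (k / exp 1) ^ k * (√(2 * π * j) * (j / exp 1) ^ j)) := by gcongr
    _ = _ := by
      have hpi : √(2 * π) ^ 2 = 2 * π := sq_sqrt (by positivity)
      push_cast
      rw [sqrt_mul (by positivity) (k : ℝ), sqrt_mul (by positivity) (j : ℝ),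
        sqrt_div (by positivity), sqrt_mul (by positivity) (j : ℝ)]
      simp only [div_pow, pow_add]
      field_simp
      rw [hpi]

lemma binomial_real_singleton_add_le_exp {p : I} (hp : 0 < (p : ℝ)) {k j : ℕ} (hk : k ≠ 0)
    (hj : j ≠ 0) (hmean : k ≤ 2 * ((k + j : ℕ) * p : ℝ)) :
    Bin(k + j, p).real {k} ≤ exp 1 / (2 * π) * √((k + j) / (k * j)) *
      exp (-((k - (k + j : ℕ) * p) ^ 2 / (3 * ((k + j : ℕ) * p)))) := by
  set m : ℝ := (k + j : ℕ) * p with hm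
  have hm0 : 0 < m := by positivity
  have hp1 : 0 ≤ 1 - (p : ℝ) := sub_nonneg.2 p.2.2
  calc Bin(k + j, p).real {k}
      = (k + j).choose k * (p ^ k * (1 - p) ^ j) := by
        rw [binomial_real_singleton, Nat.add_sub_cancel_left, mul_assoc]
    _ ≤ exp 1 / (2 * π) * √((k + j) / (k * j)) * (((k + j) / k) ^ k * ((k + j) / j) ^ j) *
          (p ^ k * (1 - p) ^ j) := by
        have := p.2.1
        gcongr
        exact cast_add_choose_le hk hj
    _ = exp 1 / (2 * π) * √((k + j) / (k * j)) *
          ((m / k) ^ k * ((k + j : ℕ) * (1 - p) / j) ^ j) := by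
        rw [hm]
        push_cast
        simp only [div_pow, mul_pow]
        ring
    _ ≤ exp 1 / (2 * π) * √((k + j) / (k * j)) * exp (-(m * klFun (k / m))) := by
        have hsum : m + (k + j : ℕ) * (1 - p) = k + j := by
          rw [hm]
          push_cast
          ring
        gcongr
        exact div_pow_mul_div_pow_le_exp_neg_klFun hm0 (by positivity) hsum
    _ ≤ exp 1 / (2 * π) * √((k + j) / (k * j)) * exp (-((k - m) ^ 2 / (3 * m))) := by
        have hkl : (k / m - 1) ^ 2 / 3 ≤ klFun (k / m) :=
          sub_one_sq_div_three_le_klFun (by positivity) (by rwa [div_le_iff₀ hm0])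
        gcongr
        calc (k - m) ^ 2 / (3 * m) = m * ((k / m - 1) ^ 2 / 3) := by field_simp
          _ ≤ m * klFun (k / m) := by gcongr

lemma four_mul_exp_one_sq_le_three_mul_pi_sq : 4 * exp 1 ^ 2 ≤ 3 * π ^ 2 := by
  calc 4 * exp 1 ^ 2 ≤ 4 * 2.7182818286 ^ 2 := by gcongr; exact exp_one_lt_d9.le
    _ ≤ 3 * 3.1415 ^ 2 := by norm_num
    _ ≤ 3 * π ^ 2 := by gcongr; exact pi_gt_d4.le

lemma mul_binomial_real_singleton_le {n k : ℕ} {p : I} (hk : 0 < k) (hkn : k < n)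
    (hmean : k ≤ 2 * (n * (p : ℝ))) {G d : ℝ} (hG : 0 ≤ G) (hd : 0 < d)
    (hdev : d ≤ |k - n * (p : ℝ)|)
    (hGd : 3 * (G ^ 2 * d ^ 2 * n) ≤ 4 * (n * (p : ℝ) * (k * (n - k)))) :
    G * Bin(n, p).real {k} ≤ √(n * (p : ℝ)) / (2 * d) * exp (-(d ^ 2 / (3 * (n * (p : ℝ))))) := by
  obtain ⟨j, rfl⟩ := Nat.exists_eq_add_of_le hkn.le
  have hj : 0 < j := by omega
  have hp : 0 < (p : ℝ) := by
    have : (0 : ℝ) < k := by exact_mod_cast hk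
    exact pos_of_mul_pos_right (by linarith) (Nat.cast_nonneg (k + j))
  set m : ℝ := (k + j : ℕ) * p
  have hsqrt : exp 1 / π * (G * d * √((k + j) / (k * j))) ≤ √m := by
    refine le_sqrt_of_sq_le ?_
    have hratio : (exp 1 / π) ^ 2 ≤ 3 / 4 := by
      rw [div_pow, div_le_div_iff₀ (by positivity) (by norm_num)]
      linarith [four_mul_exp_one_sq_le_three_mul_pi_sq]
    have hGd' : G ^ 2 * d ^ 2 * ((k + j) / (k * j)) ≤ 4 / 3 * m := by
      rw [mul_div_assoc', div_le_iff₀ (by positivity)]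
      push_cast at hGd
      linarith
    calc (exp 1 / π * (G * d * √((k + j) / (k * j)))) ^ 2
        = (exp 1 / π) ^ 2 * (G ^ 2 * d ^ 2 * ((k + j) / (k * j))) := by
          rw [mul_pow, mul_pow (G * d), sq_sqrt (by positivity), mul_pow]
      _ ≤ 3 / 4 * (4 / 3 * m) := by gcongr
      _ = m := by ring
  calc G * Bin(k + j, p).real {k}
      ≤ G * (exp 1 / (2 * π) * √((k + j) / (k * j)) * exp (-((k - m) ^ 2 / (3 * m)))) := by
        gcongr
        exact binomial_real_singleton_add_le_exp hp hk.ne' hj.ne' hmean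
    _ = exp 1 / π * (G * d * √((k + j) / (k * j))) / (2 * d) *
          exp (-((k - m) ^ 2 / (3 * m))) := by field_simp
    _ ≤ √m / (2 * d) * exp (-(d ^ 2 / (3 * m))) := by
        rw [← sq_abs ((k : ℝ) - m)]
        gcongr

lemma binomial_real_singleton_succ (n k : ℕ) (p : I) :
    (k + 1 : ℝ) * (1 - p) * Bin(n, p).real {k + 1} = (n - k : ℝ) * p * Bin(n, p).real {k} := by
  rw [binomial_real_singleton, binomial_real_singleton]
  rcases lt_or_ge k n with hkn | hkn
  · obtain ⟨j, rfl⟩ := Nat.exists_eq_add_of_lt hkn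
    have hchoose : ((k + j + 1).choose (k + 1) * (k + 1) : ℝ) = (k + j + 1).choose k * (j + 1) := by
      have := Nat.choose_succ_right_eq (k + j + 1) k
      rw [show k + j + 1 - k = j + 1 by omega] at this
      exact_mod_cast this
    rw [show k + j + 1 - k = j + 1 by omega, show k + j + 1 - (k + 1) = j by omega]
    push_cast
    linear_combination (p * p ^ k * (1 - p : ℝ) ^ j * (1 - p)) * hchoose
  · have hzero : (n - k : ℝ) * n.choose k = 0 := by
      rcases hkn.eq_or_lt with rfl | h
      · simp
      · simp [Nat.choose_eq_zero_of_lt h]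
    rw [Nat.choose_eq_zero_of_lt (Nat.lt_succ_of_le hkn)]
    push_cast
    linear_combination -(p * p ^ k * (1 - p : ℝ) ^ (n - k)) * hzero

lemma binomial_real_singleton_of_lt {n k : ℕ} (h : n < k) (p : I) : Bin(n, p).real {k} = 0 := by
  simp [binomial_real_singleton, Nat.choose_eq_zero_of_lt h]

lemma binomial_real_Ici (n K : ℕ) (p : I) :
    Bin(n, p).real (Set.Ici K) = ∑ k ∈ Ico K (n + 1), Bin(n, p).real {k} := by
  rw [sum_measureReal_singleton]
  refine measureReal_congr (Filter.eventuallyEq_set.2 ?_)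
  filter_upwards [ae_le_of_hasLaw_binomial (HasLaw.id (μ := Bin(n, p)))] with k hk
  have hkn : k < n + 1 := Nat.lt_succ_of_le hk
  simp [hkn]

lemma binomial_real_singleton_symm {n k : ℕ} (hk : k ≤ n) (p : I) :
    Bin(n, σ p).real {n - k} = Bin(n, p).real {k} := by
  simp only [binomial_real_singleton, Nat.choose_symm hk, Nat.sub_sub_self hk,
    unitInterval.coe_symm_eq, sub_sub_cancel]
  ring

lemma binomial_real_Iic_eq_symm_Ici {n K : ℕ} (hK : K ≤ n) (p : I) :
    Bin(n, p).real (Set.Iic K) = Bin(n, σ p).real (Set.Ici (n - K)) := by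
  have hIic : Set.Iic K = (Ico 0 (K + 1) : Finset ℕ) := by ext; simp
  have hsymm : ∀ k ∈ Ico 0 (K + 1),
      Bin(n, σ p).real {n - k} = Bin(n, p).real {k} := fun k hk ↦
    binomial_real_singleton_symm ((Nat.lt_succ_iff.1 (Finset.mem_Ico.1 hk).2).trans hK) p
  rw [binomial_real_Ici, hIic, ← sum_measureReal_singleton, ← sum_congr rfl hsymm,
    sum_Ico_reflect (fun k ↦ Bin(n, σ p).real {k}) 0 (Nat.succ_le_succ hK),
    Nat.add_sub_add_right, Nat.sub_zero]

lemma one_le_inv_mul_exp_neg {x : ℝ} (hx : 0 < x) (hx1 : x ≤ 3 / 4) :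
    1 ≤ x⁻¹ * exp (-(x ^ 2 / 3)) := by
  rw [← div_eq_inv_mul, le_div_iff₀ hx, one_mul]
  nlinarith [add_one_le_exp (-(x ^ 2 / 3))]

section Tails

variable {n K : ℕ} {p : I} {d : ℝ}

lemma binomial_real_Ici_le (hd : 0 < d) (hK : n * (p : ℝ) + d ≤ K) :
    Bin(n, p).real (Set.Ici K) ≤ (n * (p : ℝ) + d) * (1 - (p : ℝ)) / d * Bin(n, p).real {K} := by
  have hp0 := p.2.1
  have hp1 : 0 ≤ 1 - (p : ℝ) := sub_nonneg.2 p.2.2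
  have hdrop : ∀ k ∈ Ico K (n + 1), Bin(n, p).real {k} ≤
      (n * (p : ℝ) + d) * (1 - (p : ℝ)) / d * (Bin(n, p).real {k} - Bin(n, p).real {k + 1}) := by
    intro k hk
    have hKk : (K : ℝ) ≤ k := by exact_mod_cast (Finset.mem_Ico.1 hk).1
    have hsucc : (n * (p : ℝ) + d) * ((1 - (p : ℝ)) * Bin(n, p).real {k + 1}) ≤
        (n - (n * (p : ℝ) + d)) * ((p : ℝ) * Bin(n, p).real {k}) := by
      calc (n * (p : ℝ) + d) * ((1 - (p : ℝ)) * Bin(n, p).real {k + 1})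
          ≤ (k + 1) * ((1 - (p : ℝ)) * Bin(n, p).real {k + 1}) :=
            mul_le_mul_of_nonneg_right (by linarith) (by positivity)
        _ = (n - k) * ((p : ℝ) * Bin(n, p).real {k}) := by
          rw [← mul_assoc, ← mul_assoc, binomial_real_singleton_succ]
        _ ≤ (n - (n * (p : ℝ) + d)) * ((p : ℝ) * Bin(n, p).real {k}) := by gcongr; linarith
    rw [div_mul_eq_mul_div, le_div_iff₀ hd]
    linarith
  rw [binomial_real_Ici]
  rcases le_or_gt K (n + 1) with hKn | hKn
  · calc ∑ k ∈ Ico K (n + 1), Bin(n, p).real {k}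
        ≤ ∑ k ∈ Ico K (n + 1), (n * (p : ℝ) + d) * (1 - (p : ℝ)) / d *
            (Bin(n, p).real {k} - Bin(n, p).real {k + 1}) := sum_le_sum hdrop
      _ = (n * (p : ℝ) + d) * (1 - (p : ℝ)) / d *
            (Bin(n, p).real {K} - Bin(n, p).real {n + 1}) := by
          rw [← mul_sum, ← neg_sub (Bin(n, p).real {n + 1}),
            ← sum_Ico_sub (fun k ↦ Bin(n, p).real {k}) hKn, ← sum_neg_distrib]
          simp only [neg_sub]
      _ = (n * (p : ℝ) + d) * (1 - (p : ℝ)) / d * Bin(n, p).real {K} := by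
          rw [binomial_real_singleton_of_lt n.lt_succ_self, sub_zero]
  · rw [Finset.Ico_eq_empty_of_le hKn.le, sum_empty]
    positivity

lemma binomial_real_Iic_le (hd : 0 < d) (hK : K + d ≤ n * (p : ℝ)) :
    Bin(n, p).real (Set.Iic K) ≤ (n * (1 - (p : ℝ)) + d) * p / d * Bin(n, p).real {K} := by
  have hKn : K ≤ n := by
    have hmean : n * (p : ℝ) ≤ n := mul_le_of_le_one_right n.cast_nonneg p.2.2
    exact_mod_cast (by linarith : (K : ℝ) ≤ n)
  calc Bin(n, p).real (Set.Iic K)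
      = Bin(n, σ p).real (Set.Ici (n - K)) := binomial_real_Iic_eq_symm_Ici hKn p
    _ ≤ (n * (1 - (p : ℝ)) + d) * p / d * Bin(n, σ p).real {n - K} := by
        have hdev : n * (σ p : ℝ) + d ≤ (n - K : ℕ) := by
          rw [unitInterval.coe_symm_eq, Nat.cast_sub hKn]
          linarith
        simpa only [unitInterval.coe_symm_eq, sub_sub_cancel] using binomial_real_Ici_le hd hdev
    _ = (n * (1 - (p : ℝ)) + d) * p / d * Bin(n, p).real {K} := by
        rw [binomial_real_singleton_symm hKn]

lemma binomial_real_upper_tail_le (hp : (p : ℝ) ≤ 2 / 3) (hd : 0 < d) (hdn : 6 * d ≤ n * (p : ℝ))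
    (hd2 : 9 * (n * (p : ℝ)) ≤ 16 * d ^ 2) :
    Bin(n, p).real {k | n * (p : ℝ) + d ≤ k} ≤
      √(n * (p : ℝ)) / (2 * d) * exp (-(d ^ 2 / (3 * (n * (p : ℝ))))) := by
  set m : ℝ := n * (p : ℝ)
  -- Rounding `m + d` to an integer thus costs at most `8 / 27 * d ≤ 4 / 81 * m`.
  have hd1 : 27 / 8 ≤ d := by nlinarith only [hd, hdn, hd2]
  have hp0 : 0 < (p : ℝ) := pos_of_mul_pos_right (by linarith) n.cast_nonneg
  have hp1 : 0 ≤ 1 - (p : ℝ) := by linarith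
  set K : ℕ := ⌈m + d⌉₊ with hK
  have hKge : m + d ≤ K := Nat.le_ceil _
  have hKlt : K < m + d + 1 := Nat.ceil_lt_add_one (by linarith)
  have hKmp : K ≤ m * (2 - p) := by
    calc (K : ℝ) ≤ m * (4 / 3) := by linarith
      _ ≤ m * (2 - p) := mul_le_mul_of_nonneg_left (by linarith) (by linarith)
  have hgap : (1 - (p : ℝ)) ^ 2 * n ≤ n - K := by linarith
  have hKpos : 0 < K := Nat.ceil_pos.2 (by linarith)
  have hKn : K < n := by
    have : (0 : ℝ) < n := pos_of_mul_pos_left (by linarith) hp0.le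
    have : (0 : ℝ) < (1 - p) ^ 2 * n := by
      have : 0 < 1 - (p : ℝ) := by linarith
      positivity
    exact_mod_cast (by linarith : (K : ℝ) < n)
  have hG : 0 ≤ (m + d) * (1 - (p : ℝ)) / d := div_nonneg (mul_nonneg (by linarith) hp1) hd.le
  have hdev : d ≤ |K - m| := (by linarith : d ≤ K - m).trans (le_abs_self _)
  have hfactor : 3 * (((m + d) * (1 - (p : ℝ)) / d) ^ 2 * d ^ 2 * n) ≤ 4 * (m * (K * (n - K))) := by
    calc 3 * (((m + d) * (1 - (p : ℝ)) / d) ^ 2 * d ^ 2 * n)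
        = 3 * (m + d) * ((m + d) * ((1 - (p : ℝ)) ^ 2 * n)) := by field_simp
      _ ≤ 4 * m * (K * (n - K)) := by
          have : 0 ≤ (1 - (p : ℝ)) ^ 2 * n := by positivity
          gcongr ?_ * (?_ * ?_)
          linarith
      _ = 4 * (m * (K * (n - K))) := by ring
  calc Bin(n, p).real {k | m + d ≤ k} = Bin(n, p).real (Set.Ici K) := by
        congr 1
        ext k
        simp [hK]
    _ ≤ (m + d) * (1 - (p : ℝ)) / d * Bin(n, p).real {K} := binomial_real_Ici_le hd hKge
    _ ≤ √m / (2 * d) * exp (-(d ^ 2 / (3 * m))) :=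
        mul_binomial_real_singleton_le hKpos hKn (by linarith) hG hd hdev hfactor

lemma binomial_real_lower_tail_le (hd : 0 < d) (hdn : 6 * d ≤ n * (p : ℝ))
    (hd2 : 9 * (n * (p : ℝ)) ≤ 16 * d ^ 2) :
    Bin(n, p).real {k | k + d ≤ n * (p : ℝ)} ≤
      √(n * (p : ℝ)) / (2 * d) * exp (-(d ^ 2 / (3 * (n * (p : ℝ))))) := by
  set m : ℝ := n * (p : ℝ) with hm
  have hd1 : 27 / 8 ≤ d := by nlinarith only [hd, hdn, hd2]
  have hp1 : 0 ≤ 1 - (p : ℝ) := sub_nonneg.2 p.2.2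
  have hmn : m ≤ n := mul_le_of_le_one_right n.cast_nonneg p.2.2
  set K : ℕ := ⌊m - d⌋₊ with hK
  have hKle : K ≤ m - d := Nat.floor_le (by linarith)
  have hKgt : m - d < K + 1 := Nat.lt_floor_add_one _
  have hKpos : 0 < K := by exact_mod_cast (by linarith : (0 : ℝ) < K)
  have hKn : K < n := by exact_mod_cast (by linarith : (K : ℝ) < n)
  have hG : 0 ≤ (n * (1 - (p : ℝ)) + d) * p / d := by
    have := p.2.1
    positivity
  have hdev : d ≤ |K - m| := by
    rw [abs_sub_comm]
    exact (by linarith : d ≤ m - K).trans (le_abs_self _)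
  have hmean : 3 * ((n - m + d) * (p : ℝ)) ≤ 4 * K := by
    have hslack : 0 ≤ (m - d) * (p : ℝ) := mul_nonneg (by linarith) p.2.1
    calc 3 * ((n - m + d) * (p : ℝ)) ≤ 3 * m := by linarith
      _ ≤ 4 * K := by linarith
  have hfactor :
      3 * (((n * (1 - (p : ℝ)) + d) * p / d) ^ 2 * d ^ 2 * n) ≤ 4 * (m * (K * (n - K))) := by
    calc 3 * (((n * (1 - (p : ℝ)) + d) * p / d) ^ 2 * d ^ 2 * n)
        = m * (3 * ((n - m + d) * p)) * (n - m + d) := by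
          rw [hm]
          field_simp
      _ ≤ m * (4 * K) * (n - K) := by
          have : 0 ≤ m := by linarith
          gcongr m * ?_ * ?_
          linarith
      _ = 4 * (m * (K * (n - K))) := by ring
  calc Bin(n, p).real {k | k + d ≤ m} = Bin(n, p).real (Set.Iic K) := by
        congr 1
        ext k
        simp [hK, Nat.le_floor_iff (by linarith : 0 ≤ m - d), le_sub_iff_add_le]
    _ ≤ (n * (1 - (p : ℝ)) + d) * p / d * Bin(n, p).real {K} :=
        binomial_real_Iic_le hd (by linarith)
    _ ≤ √m / (2 * d) * exp (-(d ^ 2 / (3 * m))) :=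
        mul_binomial_real_singleton_le hKpos hKn (by linarith) hG hd hdev hfactor

lemma binomial_real_le_abs_sub_le (hp : (p : ℝ) ≤ 2 / 3) (hd : 0 < d) (hdn : 6 * d ≤ n * (p : ℝ)) :
    Bin(n, p).real {k | d ≤ |k - n * (p : ℝ)|} ≤
      √(n * (p : ℝ)) / d * exp (-(d ^ 2 / (3 * (n * (p : ℝ))))) := by
  set m : ℝ := n * (p : ℝ)
  have hm0 : 0 < m := by linarith
  rcases le_total (16 * d ^ 2) (9 * m) with hsmall | hlarge
  · have hx : d / √m ≤ 3 / 4 := by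
      rw [div_le_iff₀ (by positivity)]
      refine abs_le_of_sq_le_sq' ?_ (by positivity) |>.2
      rw [mul_pow, sq_sqrt hm0.le]
      linarith
    calc Bin(n, p).real {k | d ≤ |k - m|} ≤ 1 := measureReal_le_one
      _ ≤ (d / √m)⁻¹ * exp (-((d / √m) ^ 2 / 3)) := one_le_inv_mul_exp_neg (by positivity) hx
      _ = √m / d * exp (-(d ^ 2 / (3 * m))) := by
        rw [inv_div, div_pow, sq_sqrt hm0.le, div_div, mul_comm m]
  · have hset : {k : ℕ | d ≤ |k - m|} = {k : ℕ | m + d ≤ k} ∪ {k : ℕ | k + d ≤ m} := by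
      ext k
      simp only [Set.mem_ofPred_eq, Set.mem_union, le_abs, neg_sub, le_sub_iff_add_le',
        add_comm (k : ℝ) d]
    calc Bin(n, p).real {k | d ≤ |k - m|}
        ≤ Bin(n, p).real {k | m + d ≤ k} + Bin(n, p).real {k | k + d ≤ m} :=
          hset ▸ measureReal_union_le _ _
      _ ≤ √m / (2 * d) * exp (-(d ^ 2 / (3 * m))) + √m / (2 * d) * exp (-(d ^ 2 / (3 * m))) :=
          add_le_add (binomial_real_upper_tail_le hp hd hdn hlarge)
            (binomial_real_lower_tail_le hd hdn hlarge)
      _ = √m / d * exp (-(d ^ 2 / (3 * m))) := by ring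

end Tails

lemma two_mul_exp_neg_le_of_two_thirds_le {n p d : ℝ} (hp : 2 / 3 ≤ p) (hd : 0 < d)
    (hn : 0 < n * p) :
    2 * exp (-(2 * d ^ 2 / n)) ≤ √(n * p) / d * exp (-(d ^ 2 / (3 * (n * p)))) := by
  set x : ℝ := d / √(n * p) with hx
  have hx2 : x ^ 2 = d ^ 2 / (n * p) := by rw [hx, div_pow, sq_sqrt hn.le]
  have hn0 : n ≠ 0 := left_ne_zero_of_mul hn.ne'
  have hp0 : p ≠ 0 := by linarith
  have hx0 : 0 < x := by positivity
  have hkey : 2 * x ≤ exp (2 * p * x ^ 2 - x ^ 2 / 3) := by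
    nlinarith [add_one_le_exp (2 * p * x ^ 2 - x ^ 2 / 3), sq_nonneg (x - 1), sq_nonneg x]
  calc 2 * exp (-(2 * d ^ 2 / n)) = 2 * x * x⁻¹ * exp (-(2 * p * x ^ 2)) := by
        rw [mul_inv_cancel_right₀ hx0.ne', hx2]
        congr 3
        field_simp
    _ ≤ exp (2 * p * x ^ 2 - x ^ 2 / 3) * x⁻¹ * exp (-(2 * p * x ^ 2)) := by gcongr
    _ = x⁻¹ * exp (-(x ^ 2 / 3)) := by
        rw [mul_comm _ x⁻¹, mul_assoc, ← exp_add]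
        ring_nf
    _ = √(n * p) / d * exp (-(d ^ 2 / (3 * (n * p)))) := by
        rw [hx2, hx, inv_div]
        congr 3
        field_simp

lemma measureReal_le_abs_le_of_hasSubgaussianMGF {Ω : Type*} [MeasurableSpace Ω] {μ : Measure Ω}
    {X : Ω → ℝ} {c : NNReal} (hX : HasSubgaussianMGF X c μ) {d : ℝ} (hd : 0 ≤ d) :
    μ.real {ω | d ≤ |X ω|} ≤ 2 * exp (-(d ^ 2 / (2 * c))) := by
  have hset : {ω | d ≤ |X ω|} = {ω | d ≤ X ω} ∪ {ω | d ≤ (-X) ω} := by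
    ext ω
    simp only [Set.mem_ofPred_eq, Set.mem_union, le_abs, Pi.neg_apply]
  calc μ.real {ω | d ≤ |X ω|}
      ≤ μ.real {ω | d ≤ X ω} + μ.real {ω | d ≤ (-X) ω} := hset ▸ measureReal_union_le _ _
    _ ≤ exp (-d ^ 2 / (2 * c)) + exp (-d ^ 2 / (2 * c)) :=
        add_le_add (hX.measure_ge_le hd) (hX.neg.measure_ge_le hd)
    _ = 2 * exp (-(d ^ 2 / (2 * c))) := by
        rw [neg_div]
        ring

lemma sum_indicator_one_eq_ncard {Ω ι : Type*} [Fintype ι] (E : ι → Set Ω) (ω : Ω) :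
    ∑ i, (E i).indicator (fun _ ↦ (1 : ℝ)) ω = {i | ω ∈ E i}.ncard := by
  classical
  simp [Set.indicator_apply, Set.ncard_eq_toFinset_card', sum_boole]

section Events

variable {Ω ι : Type*} [MeasurableSpace Ω] {μ : Measure Ω} {E : ι → Set Ω}

lemma iIndepFun_mem_of_iIndepSet (hindep : iIndepSet E μ) : iIndepFun (fun i ω ↦ ω ∈ E i) μ := by
  have h := (iIndepSet_iff_iIndep _ _).1 hindep
  simp only [MeasurableSpace.generateFrom_singleton] at h
  exact h

lemma map_mem_eq_bernoulliMeasure [IsProbabilityMeasure μ] {s : Set Ω} (hs : MeasurableSet s)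
    {p : I} (hp : μ.real s = p) : μ.map (fun ω ↦ ω ∈ s) = bernoulliMeasure True False p := by
  have hmem : Measurable fun ω ↦ ω ∈ s := measurable_mem.2 hs
  have : IsProbabilityMeasure (μ.map fun ω ↦ ω ∈ s) :=
    Measure.isProbabilityMeasure_map (by fun_prop)
  refine Measure.ext_of_measureReal_singleton fun a ↦ ?_
  rw [map_measureReal_apply hmem .of_discrete]
  have hcompl : μ.real {ω | ω ∉ s} = 1 - p := by
    rw [← hp]
    exact probReal_compl_eq_one_sub hs
  by_cases ha : a
  · simp [ha, Set.preimage, hp]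
  · simp [ha, Set.preimage, hcompl]

lemma isSetBernoulli_univ_of_iIndepSet (hE : ∀ i, MeasurableSet (E i)) (hindep : iIndepSet E μ)
    {p : I} (hp : ∀ i, μ.real (E i) = p) :
    IsSetBernoulli (fun ω ↦ {i | ω ∈ E i}) Set.univ p μ where
  aemeasurable := (measurable_set_iff.2 fun i ↦ measurable_mem.2 (hE i)).aemeasurable
  map_eq := by
    have := hindep.isProbabilityMeasure
    have hmem : ∀ i, Measurable fun ω ↦ ω ∈ E i := fun i ↦ measurable_mem.2 (hE i)
    have hlaw := (iIndepFun_iff_map_fun_eq_infinitePi_map hmem).1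
      (iIndepFun_mem_of_iIndepSet hindep)
    have hset : Measurable fun P : ι → Prop ↦ {i | P i} := by fun_prop
    calc μ.map (fun ω ↦ {i | ω ∈ E i})
        = (μ.map fun ω i ↦ ω ∈ E i).map (fun P ↦ {i | P i}) :=
          (Measure.map_map hset (measurable_pi_lambda _ hmem)).symm
      _ = setBer(Set.univ, p) := by
        rw [setBernoulli_eq_map, hlaw]
        simp only [map_mem_eq_bernoulliMeasure (hE _) (hp _), bernoulliMeasure_def, Set.mem_univ]

variable [Fintype ι]

lemma map_ncard_setBernoulli_univ (p : I) :
    setBer((Set.univ : Set ι), p).map Set.ncard = Bin(Fintype.card ι, p) := by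
  refine Measure.ext_of_singleton fun k ↦ ?_
  rw [map_ncard_setBernoulli_singleton Set.finite_univ, binomial_singleton, Set.ncard_univ,
    Nat.card_eq_fintype_card]

lemma hasLaw_ncard_binomial (hE : ∀ i, MeasurableSet (E i)) (hindep : iIndepSet E μ)
    {p : I} (hp : ∀ i, μ.real (E i) = p) :
    HasLaw (fun ω ↦ {i | ω ∈ E i}.ncard) Bin(Fintype.card ι, p) μ :=
  HasLaw.comp (Y := Set.ncard) ⟨by fun_prop, map_ncard_setBernoulli_univ p⟩
    (isSetBernoulli_univ_of_iIndepSet hE hindep hp)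

lemma measureReal_le_abs_sum_indicator_sub_le_two_mul_exp
    (hE : ∀ i, MeasurableSet (E i)) (hindep : iIndepSet E μ) {p : ℝ} (hp : ∀ i, μ.real (E i) = p)
    {d : ℝ} (hd : 0 ≤ d) :
    μ.real {ω | d ≤ |∑ i, (E i).indicator (fun _ ↦ (1 : ℝ)) ω - Fintype.card ι * p|} ≤
      2 * exp (-(2 * d ^ 2 / Fintype.card ι)) := by
  have := hindep.isProbabilityMeasure
  have hterm (i : ι) :
      HasSubgaussianMGF (fun ω ↦ (E i).indicator (fun _ ↦ (1 : ℝ)) ω - p) (1 / 4) μ := by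
    have hmean : ∫ ω, (E i).indicator (fun _ ↦ (1 : ℝ)) ω ∂μ = p := by
      rw [integral_indicator_const 1 (hE i), hp, smul_eq_mul, mul_one]
    have hIcc (ω : Ω) : (E i).indicator (fun _ ↦ (1 : ℝ)) ω ∈ Set.Icc 0 1 :=
      ⟨Set.indicator_nonneg (fun _ _ ↦ zero_le_one) ω,
        Set.indicator_le_self' (fun _ _ ↦ zero_le_one) ω⟩
    have h := hasSubgaussianMGF_of_mem_Icc (μ := μ)
      (measurable_const.indicator (hE i)).aemeasurable (.of_forall hIcc)
    rw [hmean] at h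
    convert h using 1
    norm_num
  have hsum : HasSubgaussianMGF
      (fun ω ↦ ∑ i, (E i).indicator (fun _ ↦ (1 : ℝ)) ω - Fintype.card ι * p)
      (Fintype.card ι / 4) μ := by
    have h := HasSubgaussianMGF.sum_of_iIndepFun (s := Finset.univ)
      (hindep.iIndepFun_indicator.comp (fun _ x ↦ x - p) fun _ ↦ by fun_prop) fun i _ ↦ hterm i
    simpa [sum_sub_distrib, div_eq_mul_inv] using h
  refine (measureReal_le_abs_le_of_hasSubgaussianMGF hsum hd).trans_eq ?_
  push_cast
  congr 2
  field_simp
  norm_num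

lemma measureReal_le_abs_sum_indicator_sub_le (hE : ∀ i, MeasurableSet (E i))
    (hindep : iIndepSet E μ) {p : I} (hp : ∀ i, μ.real (E i) = p) {d : ℝ} (hd : 0 < d)
    (hdn : 6 * d ≤ Fintype.card ι * (p : ℝ)) :
    μ.real {ω | d ≤ |∑ i, (E i).indicator (fun _ ↦ (1 : ℝ)) ω - Fintype.card ι * p|} ≤
      √(Fintype.card ι * (p : ℝ)) / d * exp (-(d ^ 2 / (3 * (Fintype.card ι * (p : ℝ))))) := by
  rcases le_total (p : ℝ) (2 / 3) with hp23 | hp23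
  · simp only [sum_indicator_one_eq_ncard]
    calc μ.real {ω | d ≤ |({i | ω ∈ E i}.ncard : ℝ) - Fintype.card ι * p|}
        = Bin(Fintype.card ι, p).real {k | d ≤ |k - Fintype.card ι * (p : ℝ)|} :=
          (hasLaw_ncard_binomial hE hindep hp).measureReal_eq
            (p := fun k ↦ d ≤ |k - Fintype.card ι * (p : ℝ)|) .of_discrete
      _ ≤ _ := binomial_real_le_abs_sub_le hp23 hd hdn
  · exact (measureReal_le_abs_sum_indicator_sub_le_two_mul_exp hE hindep hp hd.le).trans
      (two_mul_exp_neg_le_of_two_thirds_le hp23 hd (by linarith))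

theorem binomial_concentration_general [Nonempty ι] {q ε : ℝ} (hq : 0 < q) (hε : 0 < ε)
    (hε6 : ε ≤ 1 / 6) (hE : ∀ i, MeasurableSet (E i)) (hindep : iIndepSet E μ)
    (hprob : ∀ i, μ (E i) = ENNReal.ofReal q) :
    μ {ω | |(∑ i, (E i).indicator (fun _ ↦ (1 : ℝ)) ω) / (Fintype.card ι * q) - 1| > ε} ≤
      ENNReal.ofReal
        ((1 / √(ε ^ 2 * Fintype.card ι * q)) * exp (-(Fintype.card ι * q * ε ^ 2) / 3)) := by
  have := hindep.isProbabilityMeasure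
  have hreal (i : ι) : μ.real (E i) = q := by
    rw [measureReal_def, hprob, ENNReal.toReal_ofReal hq.le]
  have hq1 : q ≤ 1 := hreal (Classical.arbitrary ι) ▸ measureReal_le_one
  set m : ℝ := Fintype.card ι * q with hm
  have hm0 : 0 < m := by positivity
  rw [← ofReal_measureReal]
  refine ENNReal.ofReal_le_ofReal ?_
  calc μ.real {ω | |(∑ i, (E i).indicator (fun _ ↦ (1 : ℝ)) ω) / m - 1| > ε}
      ≤ μ.real {ω | m * ε ≤ |∑ i, (E i).indicator (fun _ ↦ (1 : ℝ)) ω - m|} := by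
        refine measureReal_mono fun ω hω ↦ ?_
        rw [Set.mem_ofPred_eq, div_sub_one hm0.ne', abs_div, abs_of_pos hm0, gt_iff_lt,
          lt_div_iff₀' hm0] at hω
        exact hω.le
    _ ≤ √m / (m * ε) * exp (-((m * ε) ^ 2 / (3 * m))) :=
        measureReal_le_abs_sum_indicator_sub_le (p := ⟨q, hq.le, hq1⟩) hE hindep hreal
          (by positivity) (by nlinarith)
    _ = 1 / √(ε ^ 2 * Fintype.card ι * q) * exp (-(m * ε ^ 2) / 3) := by
        rw [mul_assoc (ε ^ 2), ← hm, sqrt_mul (sq_nonneg ε), sqrt_sq hε.le]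
        have hfactor : √m / (m * ε) = 1 / (ε * √m) := by
          rw [div_eq_div_iff (by positivity) (by positivity)]
          linear_combination ε * mul_self_sqrt hm0.le
        have hexponent : -((m * ε) ^ 2 / (3 * m)) = -(m * ε ^ 2) / 3 := by field_simp
        rw [hfactor, hexponent]

end Events

/-- Bollobás, Theorem 1.7(i): for `0 < q < 1/2`, `0 < ε < 1/12` and
`ε n q (1−q) ≥ 12`, if `S` is a sum of `n` independent Bernoulli(`q`) indicators, then
`P(|S/(nq) − 1| > ε) ≤ (1/√(ε² n q)) e^{−nqε²/3}`. -/
theorem binomial_concentration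
    {Ω : Type*} [MeasurableSpace Ω] (μ : Measure Ω) [IsProbabilityMeasure μ]
    (n : ℕ) (q ε : ℝ)
    (hq0 : 0 < q) (hq : q < 1 / 2) (hε0 : 0 < ε) (hε : ε < 1 / 12)
    (hlarge : 12 ≤ ε * n * q * (1 - q))
    (E : Fin n → Set Ω)
    (hEmeas : ∀ i, MeasurableSet (E i))
    (hindep : iIndepSet E μ)
    (hprob : ∀ i, μ (E i) = ENNReal.ofReal q) :
    μ {ω | |(∑ i : Fin n, Set.indicator (E i) (fun _ => (1 : ℝ)) ω) / ((n : ℝ) * q) - 1| > ε}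
      ≤ ENNReal.ofReal ((1 / Real.sqrt (ε ^ 2 * n * q)) * Real.exp (-(n * q * ε ^ 2) / 3)) := by
  have : Nonempty (Fin n) := ⟨⟨0, Nat.pos_of_ne_zero fun hn ↦ by norm_num [hn] at hlarge⟩⟩
  simpa using binomial_concentration_general hq0 hε0 (by linarith) hEmeas hindep hprob
end
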